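/- The operators 𝒟_1, …, 𝒟_n pairwise commute: 𝒟_i·𝒟_j = 𝒟_j·𝒟_i for all 1 ≤ i, j ≤ n. -/

import Mathlib

noncomputable section

/-- The Laurent polynomial ring `R[X₁^{±1}, …, Xₙ^{±1}]` in `n` variables over `R`,
realised as the monoid algebra of the additive monoid `Fin n →₀ ℤ` of exponent vectors. -/
abbrev Laur (R : Type*) [CommRing R] (n : ℕ) : Type _ :=
  AddMonoidAlgebra R (Fin n →₀ ℤ)

variable {R : Type*} [CommRing R] {n : ℕ}

/-- The monomial `c · X^a`. -/
def mono (a : Fin n →₀ ℤ) (c : R) : Laur R n := AddMonoidAlgebra.single a c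

/-- The generator `X_i`. -/
def Xel (i : Fin n) : Laur R n := mono (Finsupp.single i 1) 1

/-- The element `X_i⁻¹`. -/
def XinvEl (i : Fin n) : Laur R n := mono (Finsupp.single i (-1)) 1

/-- Multiplication by a Laurent polynomial, as a linear endomorphism. -/
def mulOp (x : Laur R n) : Module.End R (Laur R n) := LinearMap.mulLeft R x

/-- The operator of multiplication by `X_i`, with `ℕ`-indexing (`0`-based; junk value `1`
out of range). -/
def XOp (i : ℕ) : Module.End R (Laur R n) :=
  if h : i < n then mulOp (Xel ⟨i, h⟩) else 1

/-- The operator of multiplication by `X_i⁻¹`, with `ℕ`-indexing. -/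
def XinvOp (i : ℕ) : Module.End R (Laur R n) :=
  if h : i < n then mulOp (XinvEl ⟨i, h⟩) else 1

/-- Ascending product `f s * f (s+1) * ⋯ * f (s+len-1)` (equal to `1` when `len = 0`). -/
def aF {M : Type*} [Monoid M] (f : ℕ → M) (s len : ℕ) : M :=
  ((List.range' s len).map f).prod

/-- Descending product `f (s+len-1) * ⋯ * f (s+1) * f s` (equal to `1` when `len = 0`). -/
def dF {M : Type*} [Monoid M] (f : ℕ → M) (s len : ℕ) : M :=
  (((List.range' s len).map f).reverse).prod

/-- Integer power `u^z`, where `v` is a designated (two-sided) inverse of `u`. -/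
def zpowOp {M : Type*} [Monoid M] (u v : M) (z : ℤ) : M :=
  if 0 ≤ z then u ^ z.toNat else v ^ (-z).toNat

/-!
A Demazure–Lusztig operator is determined by its defining formula with the denominator cleared, so
every operator that intertwines the data of two such formulas intertwines the operators. Applied to
`π⁻¹` and `π⁻²`, this upgrades the braid relations of the `T_k` to those of the affine braid group,
which in turn give, for `T = T_{n-1}`, `X = X_n⁻¹`, `Y = Y_n`, the reflection equation
`T Y T Y = Y T Y T` and the cross relation `Y T X = T X (T Y T)`; moreover `T X T = X_{n-1}⁻¹`
commutes with `X`. Put `f(Y) = ∑ a_j Y^j` and `Y' = T Y T`. The Hecke relation makes `T` commute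
with `Y + Y'`, and the reflection equation makes it commute with `Y Y'`; hence `T` commutes with the
symmetric expression `f(Y) f(Y')`, and `𝒟 = X f(Y)` satisfies `T 𝒟 T 𝒟 = 𝒟 T 𝒟 T`, that is,
`𝒟_{n-1}` commutes with `𝒟_n`. Since `𝒟_i = T_i 𝒟_{i+1} T_i`, the braid relations propagate this to
the whole family.
-/

section OrderedProducts

variable {M : Type*} [Monoid M] (f g : ℕ → M)

theorem aF_succ_left (s l : ℕ) : aF f s (l + 1) = f s * aF f (s + 1) l := by
  simp [aF, List.range'_succ]

theorem aF_succ_right (s l : ℕ) : aF f s (l + 1) = aF f s l * f (s + l) := by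
  simp [aF, List.range'_concat]

theorem dF_zero (s : ℕ) : dF f s 0 = 1 := rfl

theorem dF_succ_left (s l : ℕ) : dF f s (l + 1) = f (s + l) * dF f s l := by
  simp [dF, List.range'_concat]

theorem dF_succ_right (s l : ℕ) : dF f s (l + 1) = dF f (s + 1) l * f s := by
  simp [dF, List.range'_succ]

variable {f g}

theorem isUnit_dF {s l : ℕ} (hf : ∀ k, k < s + l → IsUnit (f k)) : IsUnit (dF f s l) := by
  induction l with
  | zero => exact isUnit_one
  | succ l ih =>
    rw [dF_succ_left]
    exact (hf _ (by omega)).mul (ih fun k hk => hf k (by omega))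

theorem aF_mul_dF_eq_one {s l : ℕ} (hfg : ∀ k, k < s + l → f k * g k = 1) :
    aF f s l * dF g s l = 1 := by
  induction l with
  | zero => simp [aF, dF]
  | succ l ih =>
    rw [aF_succ_right, dF_succ_left, mul_assoc, ← mul_assoc (f _), hfg _ (by omega), one_mul,
      ih fun k hk => hfg k (by omega)]

theorem commute_dF {s l : ℕ} {x : M} (hf : ∀ k, k < s + l → Commute x (f k)) :
    Commute x (dF f s l) := by
  induction l with
  | zero => exact Commute.one_right x
  | succ l ih =>
    rw [dF_succ_left]
    exact (hf _ (by omega)).mul_right (ih fun k hk => hf k (by omega))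

theorem zpowOp_units (u : Mˣ) (z : ℤ) : zpowOp (u : M) (↑u⁻¹ : M) z = ↑(u ^ z) := by
  obtain ⟨k, rfl | rfl⟩ := z.eq_nat_or_neg
  · simp [zpowOp]
  · rcases k.eq_zero_or_pos with rfl | hk
    · simp [zpowOp]
    · simp [zpowOp, hk.ne']

end OrderedProducts

section BraidRelations

variable {M : Type*} [Monoid M]

/-- The relations of the Artin braid group on `m + 1` strands between its standard generators
`t 0, …, t (m - 1)`. -/
structure BraidRelations (t : ℕ → M) (m : ℕ) : Prop where
  braid : ∀ i, i + 1 < m → t i * t (i + 1) * t i = t (i + 1) * t i * t (i + 1)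
  commute : ∀ i j, i + 1 < j → j < m → Commute (t i) (t j)

/-- The relations that a generator `π` adds to the braid relations in the extended affine braid
group of type `GL`: conjugation by `π` shifts the generators, and wraps around after two steps. -/
structure AffineBraidRelations (t : ℕ → M) (π : M) (m : ℕ) : Prop extends BraidRelations t m where
  shift : ∀ i, i + 1 < m → SemiconjBy π (t (i + 1)) (t i)
  wrap : ∀ p, p + 1 = m → SemiconjBy (π * π) (t 0) (t p)

variable {t D : ℕ → M} {π x x' y : M} {m p : ℕ}

namespace BraidRelations

theorem semiconjBy_dF (ht : BraidRelations t m) {k r : ℕ} (hk : k + 1 < r) (hr : r ≤ m) :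
    SemiconjBy (dF t 0 r) (t (k + 1)) (t k) := by
  induction r, hk using Nat.le_induction with
  | base =>
    have hcomm : Commute (t (k + 1)) (dF t 0 k) :=
      commute_dF fun i hi => (ht.commute i (k + 1) (by omega) (by omega)).symm
    have hbraid : SemiconjBy (t (k + 1) * t k) (t (k + 1)) (t k) := by
      simpa only [SemiconjBy, ← mul_assoc] using (ht.braid k (by omega)).symm
    rw [dF_succ_left, dF_succ_left, ← mul_assoc, zero_add, zero_add]
    exact hbraid.mul_left hcomm.symm
  | succ r hk ih =>
    rw [dF_succ_left, zero_add]
    exact SemiconjBy.mul_left (ht.commute k r (by omega) (by omega)).symm (ih (by omega))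

theorem semiconjBy_dF_mul_dF (ht : BraidRelations t (p + 1)) :
    SemiconjBy (dF t 0 p * dF t 1 p) (t 0) (t p) := by
  have hshift (l : ℕ) (hl : l ≤ p) : dF t 0 (p + 1) * dF t 1 l = dF t 0 l * dF t 0 (p + 1) := by
    induction l with
    | zero => simp only [dF_zero, mul_one, one_mul]
    | succ l ih =>
      have h := (ht.semiconjBy_dF (k := l) (by omega) le_rfl).eq
      rw [dF_succ_left t 1, dF_succ_left t 0 l, zero_add, add_comm 1 l, ← mul_assoc, h, mul_assoc,
        ih (by omega), mul_assoc]
  have hbottom : dF t 1 p * t 0 = dF t 0 (p + 1) := (dF_succ_right t 0 p).symm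
  have htop : t p * dF t 0 p = dF t 0 (p + 1) := by rw [dF_succ_left, zero_add]
  calc dF t 0 p * dF t 1 p * t 0 = dF t 0 p * dF t 0 (p + 1) := by rw [mul_assoc, hbottom]
    _ = dF t 0 (p + 1) * dF t 1 p := (hshift p le_rfl).symm
    _ = t p * (dF t 0 p * dF t 1 p) := by rw [← htop, mul_assoc]

section ConjugateFamily

variable (ht : BraidRelations t m) (hD : ∀ i, i < m → D i = t i * D (i + 1) * t i)
  (hDm : ∀ k, k + 1 < m → Commute (t k) (D m))

include ht hD hDm

theorem commute_conj_of_succ_lt {i k : ℕ} (hk : k + 1 < i) (hi : i ≤ m) :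
    Commute (t k) (D i) := by
  induction hi using Nat.decreasingInduction with
  | self => exact hDm k hk
  | of_succ i hi ih =>
    have hki := ht.commute k i hk hi
    rw [hD i hi]
    exact (hki.mul_right (ih (by omega))).mul_right hki

theorem commute_conj_succ {i : ℕ} (hi : i + 1 < m) : Commute (t (i + 1)) (D i) := by
  have hcomm := (ht.commute_conj_of_succ_lt hD hDm (k := i) (i := i + 2) (by omega) hi).eq
  have hbraid := ht.braid i hi
  rw [hD i (by omega), hD (i + 1) hi]
  set a := t i
  set b := t (i + 1)
  set z := D (i + 1 + 1)
  calc b * (a * (b * z * b) * a) = (b * a * b) * z * b * a := by simp only [mul_assoc]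
    _ = a * b * (a * z) * b * a := by rw [← hbraid]; simp only [mul_assoc]
    _ = a * b * z * (a * b * a) := by rw [hcomm]; simp only [mul_assoc]
    _ = a * (b * z * b) * a * b := by rw [hbraid]; simp only [mul_assoc]

variable (hlast : ∀ p, p + 1 = m → Commute (D p) (D m))

include hlast

theorem commute_conj_conj_succ {i : ℕ} (hi : i < m) : Commute (D i) (D (i + 1)) := by
  obtain ⟨p, rfl⟩ : ∃ p, m = p + 1 := ⟨m - 1, by omega⟩
  have hip : i ≤ p := by omega
  induction hip using Nat.decreasingInduction with
  | self => exact hlast p rfl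
  | of_succ i hi ih =>
    have htwo : Commute (t i) (D (i + 2)) :=
      ht.commute_conj_of_succ_lt hD hDm (by omega) (by omega)
    have hD_two : Commute (D i) (D (i + 2)) := by
      rw [hD i (by omega)]
      exact (htwo.mul_left (ih (by omega))).mul_left htwo
    have hnext := (ht.commute_conj_succ hD hDm (i := i) (by omega)).symm
    rw [hD (i + 1) (by omega)]
    exact (hnext.mul_right hD_two).mul_right hnext

theorem commute_conj_conj_of_lt {i j : ℕ} (hij : i < j) (hj : j ≤ m) :
    Commute (D i) (D j) := by
  obtain ⟨j, rfl⟩ : ∃ l, j = l + 1 := ⟨j - 1, by omega⟩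
  have hij' : i ≤ j := by omega
  induction hij' using Nat.decreasingInduction with
  | self => exact ht.commute_conj_conj_succ hD hDm hlast hj
  | of_succ i hi ih =>
    have htj := ht.commute_conj_of_succ_lt hD hDm (k := i) (by omega) hj
    rw [hD i (by omega)]
    exact (htj.mul_left (ih (by omega))).mul_left htj

theorem commute_conj_conj {i j : ℕ} (hi : i ≤ m) (hj : j ≤ m) : Commute (D i) (D j) := by
  rcases lt_trichotomy i j with hij | rfl | hij
  · exact ht.commute_conj_conj_of_lt hD hDm hlast hij hj
  · exact Commute.refl _
  · exact (ht.commute_conj_conj_of_lt hD hDm hlast hij hi).symm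

end ConjugateFamily

end BraidRelations

namespace AffineBraidRelations

theorem semiconjBy_rotation_dF (h : AffineBraidRelations t π m) {l : ℕ} (hl : l < m) :
    SemiconjBy π (dF t 1 l) (dF t 0 l) := by
  induction l with
  | zero => exact SemiconjBy.one_right π
  | succ l ih =>
    rw [dF_succ_left, dF_succ_left, zero_add, add_comm 1 l]
    exact (h.shift l hl).mul_right (ih (by omega))

theorem commute_of_mul_dF_eq (h : AffineBraidRelations t π m)
    (hunit : ∀ k, k < m → IsUnit (t k)) (hy : y * dF t 0 m = π) {k : ℕ} (hk : k + 1 < m) :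
    Commute (t k) y := by
  have hcancel : IsUnit (dF t 0 m) := isUnit_dF fun i hi => hunit i (by omega)
  have hshift := (h.semiconjBy_dF (k := k) hk le_rfl).eq
  refine hcancel.mul_right_cancel ?_
  calc t k * y * dF t 0 m = π * t (k + 1) := by rw [mul_assoc, hy, (h.shift k hk).eq]
    _ = y * t k * dF t 0 m := by rw [← hy, mul_assoc, hshift, mul_assoc]

variable (hunit : ∀ k, k < p + 1 → IsUnit (t k)) (hy : y * dF t 0 (p + 1) = π)

include hunit hy

theorem reflection_equation_of_mul_dF_eq (h : AffineBraidRelations t π (p + 1)) :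
    t p * y * t p * y = y * t p * y * t p := by
  set c := dF t 0 p
  set d := dF t 1 p
  have hy' : y * t p * c = π := by rw [← hy, dF_succ_left, zero_add, mul_assoc]
  have hsquare : y * t p * (y * t p) * (c * d) = π * π := by
    calc y * t p * (y * t p) * (c * d) = y * t p * (y * t p * c) * d := by
          simp only [mul_assoc]
      _ = y * t p * (c * π) := by
          rw [hy', mul_assoc, (h.semiconjBy_rotation_dF p.lt_succ_self).eq]
      _ = π * π := by rw [← mul_assoc, hy']
  have hcancel : IsUnit (c * d) :=
    (isUnit_dF fun i hi => hunit i (by omega)).mul (isUnit_dF fun i hi => hunit i (by omega))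
  have hcomm : Commute (t p) (y * t p * (y * t p)) := by
    refine hcancel.mul_right_cancel ?_
    calc t p * (y * t p * (y * t p)) * (c * d) = π * π * t 0 := by
          rw [mul_assoc, hsquare, (h.wrap p rfl).eq]
      _ = y * t p * (y * t p) * t p * (c * d) := by
          rw [← hsquare, mul_assoc, h.semiconjBy_dF_mul_dF.eq, ← mul_assoc]
  refine (hunit p p.lt_succ_self).mul_right_cancel ?_
  simpa only [mul_assoc] using hcomm.eq

theorem cross_relation_of_mul_dF_eq (hx : ∀ k, k < p → Commute (t k) x)
    (htx : t p * x * t p = x') (hπx : SemiconjBy π x x') :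
    y * t p * x = t p * x * (t p * y * t p) := by
  set c := dF t 0 p
  have hy' : y * t p * c = π := by rw [← hy, dF_succ_left, zero_add, mul_assoc]
  have hxc : Commute x c := commute_dF fun k hk => (hx k (by omega)).symm
  have hcancel : IsUnit c := isUnit_dF fun i hi => hunit i (by omega)
  refine hcancel.mul_right_cancel ?_
  calc y * t p * x * c = π * x := by rw [mul_assoc, hxc.eq, ← mul_assoc, hy']
    _ = t p * x * t p * (y * t p * c) := by rw [hπx.eq, htx, hy']
    _ = t p * x * (t p * y * t p) * c := by simp only [mul_assoc]

end AffineBraidRelations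

end BraidRelations

section LaurentSums

variable {A : Type*} [Ring A] [Algebra R A]

/-- The value at the unit `y` of the Laurent polynomial `∑ j ∈ s, a j • T ^ j`. -/
def laurentSum (s : Finset ℤ) (a : ℤ → R) (y : Aˣ) : A := ∑ j ∈ s, a j • (↑(y ^ j) : A)

theorem semiconjBy_laurentSum {b : A} {y z : Aˣ} (h : SemiconjBy b (y : A) z)
    (s : Finset ℤ) (a : ℤ → R) : SemiconjBy b (laurentSum s a y) (laurentSum s a z) := by
  have hpow (j : ℤ) : b * ↑(y ^ j) = ↑(z ^ j) * b := h.units_zpow_right j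
  simp only [SemiconjBy, laurentSum, Finset.mul_sum, Finset.sum_mul, mul_smul_comm,
    smul_mul_assoc, hpow]

theorem commute_pow_add_pow {b y z : A} (hyz : Commute y z) (hadd : Commute b (y + z))
    (hmul : Commute b (y * z)) : ∀ d : ℕ, Commute b (y ^ d + z ^ d)
  | 0 => by simpa only [pow_zero] using (Commute.one_right b).add_right (Commute.one_right b)
  | 1 => by simpa only [pow_one] using hadd
  | d + 2 => by
    have hnewton : y ^ (d + 2) + z ^ (d + 2)
        = (y + z) * (y ^ (d + 1) + z ^ (d + 1)) - y * z * (y ^ d + z ^ d) := by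
      have hzy : z * y ^ (d + 1) = y * z * y ^ d := by rw [pow_succ', ← mul_assoc, hyz.eq]
      simp only [add_mul, mul_add, hzy]
      simp only [pow_succ', mul_assoc]
      abel
    rw [hnewton]
    exact (hadd.mul_right (commute_pow_add_pow hyz hadd hmul (d + 1))).sub_right
      (hmul.mul_right (commute_pow_add_pow hyz hadd hmul d))

theorem commute_zpow_mul_zpow_add {b : A} {y z : Aˣ} (hyz : Commute y z)
    (hadd : Commute b (y + z)) (hmul : Commute b (y * z)) (j k : ℤ) :
    Commute b (↑(y ^ j * z ^ k) + ↑(y ^ k * z ^ j)) := by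
  wlog hkj : k ≤ j generalizing j k
  · rw [add_comm]
    exact this k j (by omega)
  obtain ⟨d, rfl⟩ := Int.le.dest hkj
  have hmul' : SemiconjBy b ↑(y * z) ↑(y * z) := by rwa [Units.val_mul]
  have hmul_zpow : Commute b ↑((y * z) ^ k) := hmul'.units_zpow_right k
  have hleft : y ^ (k + d) * z ^ k = (y * z) ^ k * y ^ d := by
    rw [hyz.mul_zpow, zpow_add, zpow_natCast, mul_assoc, mul_assoc,
      ((hyz.zpow_right k).pow_left d).eq]
  have hright : y ^ k * z ^ (k + d) = (y * z) ^ k * z ^ d := by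
    rw [hyz.mul_zpow, zpow_add, zpow_natCast, mul_assoc]
  rw [hleft, hright, Units.val_mul, Units.val_mul, ← mul_add, Units.val_pow_eq_pow_val,
    Units.val_pow_eq_pow_val]
  exact hmul_zpow.mul_right (commute_pow_add_pow hyz.units_val hadd hmul d)

theorem commute_sum_sum {ι : Type*} {b : A} {g : ι → ι → A}
    (hdiag : ∀ j, Commute b (g j j)) (hsymm : ∀ j k, Commute b (g j k + g k j))
    (s : Finset ι) : Commute b (∑ j ∈ s, ∑ k ∈ s, g j k) := by
  classical
  induction s using Finset.induction_on with
  | empty => simp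
  | insert j s hj ih =>
    have hsplit : ∑ i ∈ insert j s, ∑ k ∈ insert j s, g i k
        = g j j + ∑ k ∈ s, (g j k + g k j) + ∑ i ∈ s, ∑ k ∈ s, g i k := by
      simp only [Finset.sum_insert hj, Finset.sum_add_distrib]
      abel
    rw [hsplit]
    exact ((hdiag j).add_right (Commute.sum_right _ _ _ fun k _ => hsymm j k)).add_right ih

theorem commute_laurentSum_mul_laurentSum {b : A} {y z : Aˣ} (hyz : Commute y z)
    (hadd : Commute b (y + z)) (hmul : Commute b (y * z)) (s : Finset ℤ) (a : ℤ → R) :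
    Commute b (laurentSum s a y * laurentSum s a z) := by
  have hexpand : laurentSum s a y * laurentSum s a z
      = ∑ j ∈ s, ∑ k ∈ s, (a j * a k) • (↑(y ^ j * z ^ k) : A) := by
    simp only [laurentSum, Finset.sum_mul_sum, smul_mul_smul_comm, Units.val_mul]
  rw [hexpand]
  refine commute_sum_sum (fun j => ?_) (fun j k => ?_) s
  · rw [← hyz.mul_zpow]
    have hmul' : SemiconjBy b ↑(y * z) ↑(y * z) := by rwa [Units.val_mul]
    exact (hmul'.units_zpow_right j : Commute b _).smul_right _
  · rw [mul_comm (a k), ← smul_add]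
    exact (commute_zpow_mul_zpow_add hyz hadd hmul j k).smul_right _

theorem commute_add_conj {c : R} {b y : A} (hb : b * b = 1 + c • b) :
    Commute b (y + b * y * b) := by
  have hl : b * (b * y * b) = y * b + c • (b * y * b) := by
    rw [mul_assoc b y, ← mul_assoc, hb, add_mul, one_mul, smul_mul_assoc]
  have hr : b * y * b * b = b * y + c • (b * y * b) := by
    rw [mul_assoc, hb, mul_add, mul_one, mul_smul_comm]
  rw [Commute, SemiconjBy, mul_add, add_mul, hl, hr]
  abel

theorem mul_sub_smul_one_of_mul_self {c : R} {b : A} (hb : b * b = 1 + c • b) :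
    b * (b - c • 1) = 1 := by
  rw [mul_sub, hb, mul_smul_comm, mul_one, add_sub_cancel_right]

theorem sub_smul_one_mul_of_mul_self {c : R} {b : A} (hb : b * b = 1 + c • b) :
    (b - c • 1) * b = 1 := by
  rw [sub_mul, hb, smul_mul_assoc, one_mul, add_sub_cancel_right]

theorem commute_conj_of_reflection_equation {M : Type*} [Monoid M] {b x f g : M}
    (hx : b * x * b * x = x * b * x * b) (hfg : Commute f g) (hb : Commute b (f * g))
    (hfx : SemiconjBy (b * x) g f) : Commute (b * (x * f) * b) (x * f) := by
  calc b * (x * f) * b * (x * f) = b * x * (f * (b * x)) * f := by simp only [mul_assoc]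
    _ = b * x * b * x * (g * f) := by rw [← hfx.eq]; simp only [mul_assoc]
    _ = x * b * x * (b * (f * g)) := by rw [hx, hfg.eq]; simp only [mul_assoc]
    _ = x * (b * x * g) * f * b := by rw [hb.eq, hfg.eq]; simp only [mul_assoc]
    _ = x * f * (b * (x * f) * b) := by rw [hfx.eq]; simp only [mul_assoc]

theorem commute_conj_mul_laurentSum {c : R} {b x : A} {y : Aˣ} (hunit : IsUnit b)
    (hb : b * b = 1 + c • b) (hy : b * y * b * y = y * b * y * b)
    (hx : b * x * b * x = x * b * x * b) (hxy : y * b * x = b * x * (b * y * b))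
    (s : Finset ℤ) (a : ℤ → R) :
    Commute (b * (x * laurentSum s a y) * b) (x * laurentSum s a y) := by
  obtain ⟨z, hz⟩ : IsUnit (b * y * b) := (hunit.mul y.isUnit).mul hunit
  have hyz : Commute (y : A) z := by
    rw [hz, Commute, SemiconjBy, hy]; simp only [mul_assoc]
  have hlaurent : Commute (laurentSum s a y) (laurentSum s a z) :=
    (semiconjBy_laurentSum (semiconjBy_laurentSum hyz s a : Commute _ _).symm s a).symm
  have hmul : Commute b (y * z) := by
    rw [hz, Commute, SemiconjBy]
    calc b * (y * (b * y * b)) = b * y * b * y * b := by simp only [mul_assoc]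
      _ = y * (b * y * b) * b := by rw [hy]; simp only [mul_assoc]
  have hadd : Commute b (y + z) := hz ▸ commute_add_conj hb
  have hbx : SemiconjBy (b * x) (z : A) y := by
    rw [hz, SemiconjBy, ← hxy, mul_assoc]
  exact commute_conj_of_reflection_equation hx hlaurent
    (commute_laurentSum_mul_laurentSum hyz.units_of_val hadd hmul s a)
    (semiconjBy_laurentSum hbx s a)

theorem AffineBraidRelations.commute_conj_laurentSum {t D : ℕ → A} {π x x' : A} {y : Aˣ} {m : ℕ}
    {c : R} (h : AffineBraidRelations t π m) (hecke : ∀ k, k < m → t k * t k = 1 + c • t k)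
    (hy : y * dF t 0 m = π) (hx : ∀ k, k + 1 < m → Commute (t k) x)
    (htx : ∀ p, p + 1 = m → t p * x * t p = x') (hπx : 0 < m → SemiconjBy π x x')
    (hxx' : Commute x x') (s : Finset ℤ) (a : ℤ → R)
    (hD : ∀ i, D i = aF t i (m - i) * (x * laurentSum s a y) * dF t i (m - i)) {i j : ℕ}
    (hi : i ≤ m) (hj : j ≤ m) : Commute (D i) (D j) := by
  have hunit (k : ℕ) (hk : k < m) : IsUnit (t k) :=
    ⟨⟨t k, _, mul_sub_smul_one_of_mul_self (hecke k hk),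
      sub_smul_one_mul_of_mul_self (hecke k hk)⟩, rfl⟩
  have hDm : D m = x * laurentSum s a y := by simp [hD, aF, dF]
  have hD_succ (i : ℕ) (hi : i < m) : D i = t i * D (i + 1) * t i := by
    obtain ⟨l, hl⟩ : ∃ l, m - i = l + 1 := ⟨m - i - 1, by omega⟩
    have hl' : m - (i + 1) = l := by omega
    rw [hD, hD, hl, hl', aF_succ_left, dF_succ_right]
    simp only [mul_assoc]
  refine h.commute_conj_conj hD_succ (fun k hk => ?_) (fun p hp => ?_) hi hj
  · have hty : Commute (t k) (laurentSum s a y) :=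
      semiconjBy_laurentSum (h.commute_of_mul_dF_eq hunit hy hk) s a
    exact hDm ▸ (hx k hk).mul_right hty
  · subst hp
    have hreflect : t p * x * t p * x = x * t p * x * t p := by
      rw [htx p rfl, ← hxx'.eq, ← htx p rfl]
      simp only [mul_assoc]
    rw [hD_succ p p.lt_succ_self, hDm]
    exact commute_conj_mul_laurentSum (hunit p p.lt_succ_self) (hecke p p.lt_succ_self)
      (reflection_equation_of_mul_dF_eq hunit hy h) hreflect
      (cross_relation_of_mul_dF_eq hunit hy (fun k hk => hx k (by omega)) (htx p rfl)
        (hπx p.succ_pos)) s a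

end LaurentSums

section DemazureLusztig

variable {A : Type*} [CommRing A] [Algebra R A]

/-- `T` is a Demazure–Lusztig operator for the operator `s`, the elements `x`, `y` and the scalars
`σ`, `τ`: the defining formula `T p = ((σ y - τ x) s(p) + (τ - σ) y p) / (y - x)` with its
denominator cleared. The Hecke parameter is `τ`, and `σ` stands for `τ⁻¹`. -/
def IsDemazureLusztig (σ τ : R) (s : Module.End R A) (x y : A) (T : Module.End R A) : Prop :=
  ∀ p, (y - x) * T p = (σ • y - τ • x) * s p + (τ - σ) • (y * p)

variable {σ τ : R} {s s' T T' : Module.End R A} {x y x' y' : A}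

namespace IsDemazureLusztig

theorem apply_mul_of_fixed (hT : IsDemazureLusztig σ τ s x y T) (hreg : IsLeftRegular (y - x))
    {z : A} (hz : ∀ p, s (z * p) = z * s p) (p : A) : T (z * p) = z * T p := by
  refine hreg ?_
  have hp := hT p
  have hzp := hT (z * p)
  simp only [hz, Algebra.smul_def] at hp hzp ⊢
  linear_combination hzp - z * hp

theorem apply_inv_mul (hT : IsDemazureLusztig σ τ s x y T) (hreg : IsLeftRegular (y - x))
    (hx : x * x' = 1) (hy : y * y' = 1) (hs : ∀ p, s (y' * p) = x' * s p) (p : A) :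
    T (y' * p) = x' * (T p - (τ - σ) • p) := by
  refine hreg ?_
  have hp := hT p
  have hyp := hT (y' * p)
  simp only [hs, Algebra.smul_def, map_sub] at hp hyp ⊢
  linear_combination hyp - x' * hp
    + (algebraMap R A τ - algebraMap R A σ) * p * (hy - hx)

theorem smul (hT : IsDemazureLusztig σ τ s x y T) (r : R) :
    IsDemazureLusztig σ τ s (r • x) (r • y) T := by
  intro p
  have hp := hT p
  simp only [Algebra.smul_def] at hp ⊢
  linear_combination algebraMap R A r * hp

theorem map_apply (hT : IsDemazureLusztig σ τ s x y T) {φ : Module.End R A}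
    (hx : ∀ p, φ (x * p) = x' * φ p) (hy : ∀ p, φ (y * p) = y' * φ p) (p : A) :
    (y' - x') * φ (T p) = (σ • y' - τ • x') * φ (s p) + (τ - σ) • (y' * φ p) := by
  simpa only [sub_mul, smul_mul_assoc, map_add, map_sub, map_smul, hx, hy]
    using congrArg φ (hT p)

theorem semiconjBy (hT : IsDemazureLusztig σ τ s x y T) (hT' : IsDemazureLusztig σ τ s' x' y' T')
    (hreg : IsLeftRegular (y' - x')) {φ : Module.End R A} (hx : ∀ p, φ (x * p) = x' * φ p)
    (hy : ∀ p, φ (y * p) = y' * φ p) (hs : SemiconjBy φ s s') : SemiconjBy φ T T' := by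
  refine LinearMap.ext fun p => hreg ?_
  have hsp : φ (s p) = s' (φ p) := LinearMap.congr_fun hs.eq p
  calc (y' - x') * φ (T p) = (σ • y' - τ • x') * φ (s p) + (τ - σ) • (y' * φ p) :=
        hT.map_apply hx hy p
    _ = (y' - x') * T' (φ p) := by rw [hsp, hT']

theorem quadratic (hT : IsDemazureLusztig σ τ s x y T) (hreg : IsLeftRegular (y - x))
    (hs : s * s = 1) (hx : ∀ p, s (x * p) = y * s p) (hy : ∀ p, s (y * p) = x * s p) :
    T * T = (σ * τ) • (1 : Module.End R A) + (τ - σ) • T := by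
  refine LinearMap.ext fun p => (hreg.pow 2) ?_
  have hsp : s (s p) = p := LinearMap.congr_fun hs p
  have hp := hT p
  have hTp := hT (T p)
  have hsTp := hT.map_apply hx hy p
  simp only [Module.End.mul_apply, LinearMap.add_apply, LinearMap.smul_apply, Module.End.one_apply]
  simp only [Algebra.smul_def, map_sub, map_mul, hsp] at hp hTp hsTp ⊢
  set u := algebraMap R A σ
  set v := algebraMap R A τ
  linear_combination (y - x) * hTp - (u * y - v * x) * hsTp + (v - u) * x * hp

theorem braid {s₁ s₂ T₁ T₂ : Module.End R A} {a b d : A}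
    (hT₁ : IsDemazureLusztig σ τ s₁ a b T₁) (hT₂ : IsDemazureLusztig σ τ s₂ b d T₂)
    (hab : IsLeftRegular (b - a)) (hbd : IsLeftRegular (d - b)) (had : IsLeftRegular (d - a))
    (hs₁ : s₁ * s₁ = 1) (hs₂ : s₂ * s₂ = 1) (hs : s₁ * s₂ * s₁ = s₂ * s₁ * s₂)
    (ha₁ : ∀ p, s₁ (a * p) = b * s₁ p) (hb₁ : ∀ p, s₁ (b * p) = a * s₁ p)
    (hd₁ : ∀ p, s₁ (d * p) = d * s₁ p) (ha₂ : ∀ p, s₂ (a * p) = a * s₂ p)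
    (hb₂ : ∀ p, s₂ (b * p) = d * s₂ p) (hd₂ : ∀ p, s₂ (d * p) = b * s₂ p) :
    T₁ * T₂ * T₁ = T₂ * T₁ * T₂ := by
  -- Multiply by `(b - a)² (d - b)² (d - a)` and apply the defining formulas from the outermost
  -- operator inwards (`l` for the left word, `r` for the right one): both words then expand into
  -- the operators `s_w p`, `w ∈ S₃`, and the coefficients agree.
  refine LinearMap.ext fun p => (((hab.pow 2).mul (hbd.pow 2)).mul had) ?_
  have h₁₁ : s₁ (s₁ p) = p := LinearMap.congr_fun hs₁ p
  have h₂₂ : s₂ (s₂ p) = p := LinearMap.congr_fun hs₂ p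
  have h₁₂₁ : s₁ (s₂ (s₁ p)) = s₂ (s₁ (s₂ p)) := LinearMap.congr_fun hs p
  have l₁ := hT₁ (T₂ (T₁ p))
  have l₂ := hT₂.map_apply hb₁ hd₁ (T₁ p)
  have l₃ := hT₂ (T₁ p)
  have l₄ := hT₁.map_apply (φ := s₁ * s₂) (x' := b) (y' := d) (by simp [ha₂, ha₁])
    (by simp [hb₂, hd₁]) p
  have l₅ := hT₁.map_apply ha₁ hb₁ p
  have l₆ := hT₁.map_apply ha₂ hb₂ p
  have l₇ := hT₁ p
  have r₁ := hT₂ (T₁ (T₂ p))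
  have r₂ := hT₁.map_apply ha₂ hb₂ (T₂ p)
  have r₃ := hT₁ (T₂ p)
  have r₄ := hT₂.map_apply (φ := s₂ * s₁) (x' := a) (y' := b) (by simp [hb₁, ha₂])
    (by simp [hd₁, hd₂]) p
  have r₅ := hT₂.map_apply hb₂ hd₂ p
  have r₆ := hT₂.map_apply hb₁ hd₁ p
  have r₇ := hT₂ p
  simp only [Module.End.mul_apply, Algebra.smul_def, map_sub, h₁₁, h₂₂, h₁₂₁]
    at l₁ l₂ l₃ l₄ l₅ l₆ l₇ r₁ r₂ r₃ r₄ r₅ r₆ r₇ ⊢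
  set u := algebraMap R A σ
  set v := algebraMap R A τ
  linear_combination
    (d - b) * ((b - a) * (d - a) * (d - b) * l₁ + (v - u) ^ 2 * b * d * (d - a) * l₇
      + (u * b - v * a) * ((b - a) * (d - b) * l₂ - (v - u) * d * (d - b) * l₅)
      + (u * b - v * a) * (u * d - v * a) * (b - a) * l₄
      + (v - u) * b * (b - a) * ((d - a) * l₃ + (u * d - v * b) * l₆))
    - (b - a) * ((b - a) * (d - a) * (d - b) * r₁ + (v - u) ^ 2 * b * d * (d - a) * r₇
      + (u * d - v * b) * ((b - a) * (d - b) * r₂ - (v - u) * d * (b - a) * r₅)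
      + (u * d - v * b) * (u * d - v * a) * (d - b) * r₄
      + (v - u) * d * (d - b) * ((d - a) * r₃ + (u * b - v * a) * r₆))

end IsDemazureLusztig

end DemazureLusztig

section LaurentPolynomials

theorem mono_mul_mono (u v : Fin n →₀ ℤ) (r t : R) :
    mono u r * mono v t = mono (u + v) (r * t) :=
  AddMonoidAlgebra.single_mul_single ..

theorem Xel_mul_XinvEl (i : Fin n) : (Xel i * XinvEl i : Laur R n) = 1 := by
  rw [Xel, XinvEl, mono_mul_mono, ← Finsupp.single_add]
  simp [mono, AddMonoidAlgebra.one_def]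

theorem end_ext {S S' : Module.End R (Laur R n)} (h : ∀ v, S (mono v 1) = S' (mono v 1)) :
    S = S' :=
  AddMonoidAlgebra.lhom_ext' fun v => LinearMap.ext_ring (h v)

theorem isLeftRegular_Xel_sub_Xel {i j : Fin n} (hij : i ≠ j) :
    IsLeftRegular (Xel j - Xel i : Laur R n) := by
  rw [isLeftRegular_iff_right_eq_zero_of_mul]
  intro p hp
  have hshift (v : Fin n →₀ ℤ) :
      p.coeff v = p.coeff (-Finsupp.single i 1 + (Finsupp.single j 1 + v)) := by
    have h := congrArg (fun g : Laur R n => g.coeff (Finsupp.single j 1 + v))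
      (sub_eq_zero.mp ((sub_mul _ _ p).symm.trans hp))
    simpa [Xel, mono, AddMonoidAlgebra.coeff_single_mul_apply] using h
  by_contra hne
  have hsupp : p.coeff.support.Nonempty :=
    Finsupp.support_nonempty_iff.mpr fun h => hne (AddMonoidAlgebra.coeff_eq_zero.mp h)
  obtain ⟨v, hv, hmax⟩ := p.coeff.support.exists_max_image (· j) hsupp
  have hle := hmax (-Finsupp.single i 1 + (Finsupp.single j 1 + v))
    (Finsupp.mem_support_iff.mpr (hshift v ▸ Finsupp.mem_support_iff.mp hv))
  simp [hij] at hle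

end LaurentPolynomials

section MonomialOperators

/-- `S` is the monomial operator that permutes the variables by `w` and rescales by the
character `χ`: it sends `X^v` to `χ v • X^(w v)`. -/
def IsMonomialOp (w : Equiv.Perm (Fin n)) (χ : AddChar (Fin n →₀ ℤ) Rˣ)
    (S : Module.End R (Laur R n)) : Prop :=
  ∀ v, S (mono v 1) = (χ v : R) • mono (Finsupp.equivMapDomain w v) 1

/-- The character `v ↦ q ^ v i` of the lattice of exponent vectors. -/
def powChar (q : Rˣ) (i : Fin n) : AddChar (Fin n →₀ ℤ) Rˣ where
  toFun v := q ^ v i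
  map_zero_eq_one' := by simp
  map_add_eq_mul' u v := by simp [zpow_add]

variable {w w' : Equiv.Perm (Fin n)} {χ χ' : AddChar (Fin n →₀ ℤ) Rˣ}
  {S S' : Module.End R (Laur R n)}

namespace IsMonomialOp

theorem mul_apply_mono (hS : IsMonomialOp w χ S) (hS' : IsMonomialOp w' χ' S') (v : Fin n →₀ ℤ) :
    (S * S') (mono v 1) = ((χ' v * χ (Finsupp.equivMapDomain w' v) : Rˣ) : R) •
      mono (Finsupp.equivMapDomain (w * w') v) 1 := by
  rw [Module.End.mul_apply, hS' v, map_smul, hS, smul_smul, Units.val_mul,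
    Equiv.Perm.mul_def, Finsupp.equivMapDomain_trans]

theorem apply_mono_mul (hS : IsMonomialOp w χ S) (u : Fin n →₀ ℤ) (p : Laur R n) :
    S (mono u 1 * p) = (χ u : R) • (mono (Finsupp.equivMapDomain w u) 1 * S p) := by
  have h : S ∘ₗ mulOp (mono u 1)
      = (χ u : R) • (mulOp (mono (Finsupp.equivMapDomain w u) 1) * S) := by
    refine end_ext fun v => ?_
    have hadd : Finsupp.equivMapDomain w (u + v)
        = Finsupp.equivMapDomain w u + Finsupp.equivMapDomain w v := by ext; simp
    simp [mulOp, mono_mul_mono, hS _, AddChar.map_add_eq_mul, hadd, smul_smul]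
  exact LinearMap.congr_fun h p

theorem apply_Xel_mul (hS : IsMonomialOp w χ S) (i : Fin n) (p : Laur R n) :
    S (Xel i * p) = (χ (Finsupp.single i 1) : R) • (Xel (w i) * S p) := by
  rw [Xel, hS.apply_mono_mul, Finsupp.equivMapDomain_single, Xel]

theorem apply_XinvEl_mul (hS : IsMonomialOp w χ S) (i : Fin n) (p : Laur R n) :
    S (XinvEl i * p) = (χ (Finsupp.single i (-1)) : R) • (XinvEl (w i) * S p) := by
  rw [XinvEl, hS.apply_mono_mul, Finsupp.equivMapDomain_single, XinvEl]

end IsMonomialOp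

end MonomialOperators

section SymmetricGroupAction

variable {w : Equiv.Perm (Fin n)} {χ : AddChar (Fin n →₀ ℤ) Rˣ} {S : Module.End R (Laur R n)}
  {W : Equiv.Perm (Fin n) → Module.End R (Laur R n)} (hW : ∀ w, IsMonomialOp w 1 (W w))
  {σ τ : R} {i j k l : Fin n} {T T' : Module.End R (Laur R n)}

include hW

theorem map_mul_of_isMonomialOp (w w' : Equiv.Perm (Fin n)) : W (w * w') = W w * W w' :=
  end_ext fun v => by
    rw [(hW w).mul_apply_mono (hW w'), hW]
    simp

theorem map_one_of_isMonomialOp : W 1 = 1 :=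
  end_ext fun v => by
    rw [hW]
    simp [Equiv.Perm.one_def]

theorem map_swap_mul_self (i j : Fin n) : W (Equiv.swap i j) * W (Equiv.swap i j) = 1 := by
  rw [← map_mul_of_isMonomialOp hW, Equiv.swap_mul_self, map_one_of_isMonomialOp hW]

theorem map_apply_Xel_mul (w : Equiv.Perm (Fin n)) (i : Fin n) (p : Laur R n) :
    W w (Xel i * p) = Xel (w i) * W w p := by
  simpa using (hW w).apply_Xel_mul i p

theorem map_apply_XinvEl_mul (w : Equiv.Perm (Fin n)) (i : Fin n) (p : Laur R n) :
    W w (XinvEl i * p) = XinvEl (w i) * W w p := by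
  simpa using (hW w).apply_XinvEl_mul i p

theorem semiconjBy_map_swap (hS : IsMonomialOp w χ S)
    (hχ : ∀ v, χ (Finsupp.equivMapDomain (Equiv.swap i j) v) = χ v) :
    SemiconjBy S (W (Equiv.swap i j)) (W (Equiv.swap (w i) (w j))) :=
  end_ext fun v => by
    rw [hS.mul_apply_mono (hW _), (hW _).mul_apply_mono hS, hχ, Equiv.mul_swap_eq_swap_mul]
    simp

theorem semiconjBy_demazureLusztig (hS : IsMonomialOp w χ S)
    (hχ : ∀ v, χ (Finsupp.equivMapDomain (Equiv.swap i j) v) = χ v) (hij : i ≠ j)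
    (hk : w i = k) (hl : w j = l)
    (hT : IsDemazureLusztig σ τ (W (Equiv.swap i j)) (Xel i) (Xel j) T)
    (hT' : IsDemazureLusztig σ τ (W (Equiv.swap k l)) (Xel k) (Xel l) T') :
    SemiconjBy S T T' := by
  subst hk hl
  have hχj : χ (Finsupp.single j 1) = χ (Finsupp.single i 1) := by
    simpa using hχ (Finsupp.single i 1)
  have hreg : IsLeftRegular ((χ (Finsupp.single i 1) : R) • Xel (w j)
      - (χ (Finsupp.single i 1) : R) • Xel (w i) : Laur R n) := by
    rw [← smul_sub, Algebra.smul_def]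
    exact (((χ _).isUnit.map (algebraMap R (Laur R n))).isRegular.left).mul
      (isLeftRegular_Xel_sub_Xel (w.injective.ne hij))
  refine hT.semiconjBy (hT'.smul _) hreg (fun p => ?_) (fun p => ?_)
    (semiconjBy_map_swap hW hS hχ)
  · rw [hS.apply_Xel_mul, smul_mul_assoc]
  · rw [hS.apply_Xel_mul, hχj, smul_mul_assoc]

theorem commute_demazureLusztig (hij : i ≠ j) (hkl : k ≠ l) (hik : i ≠ k) (hil : i ≠ l)
    (hjk : j ≠ k) (hjl : j ≠ l)
    (hT : IsDemazureLusztig σ τ (W (Equiv.swap i j)) (Xel i) (Xel j) T)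
    (hT' : IsDemazureLusztig σ τ (W (Equiv.swap k l)) (Xel k) (Xel l) T') : Commute T T' := by
  have hk : Equiv.swap i j k = k := Equiv.swap_apply_of_ne_of_ne hik.symm hjk.symm
  have hl : Equiv.swap i j l = l := Equiv.swap_apply_of_ne_of_ne hil.symm hjl.symm
  have hi : Equiv.swap k l i = i := Equiv.swap_apply_of_ne_of_ne hik hil
  have hj : Equiv.swap k l j = j := Equiv.swap_apply_of_ne_of_ne hjk hjl
  have hreg := isLeftRegular_Xel_sub_Xel (R := R) hij
  have hswap : SemiconjBy (W (Equiv.swap k l)) T T :=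
    semiconjBy_demazureLusztig hW (hW _) (by simp) hij hi hj hT hT
  refine hT'.semiconjBy hT' (isLeftRegular_Xel_sub_Xel hkl)
    (hT.apply_mul_of_fixed hreg fun p => ?_) (hT.apply_mul_of_fixed hreg fun p => ?_)
    hswap.symm
  · rw [map_apply_Xel_mul hW, hk]
  · rw [map_apply_Xel_mul hW, hl]

theorem braid_demazureLusztig (hij : i ≠ j) (hjk : j ≠ k) (hik : i ≠ k)
    (hT : IsDemazureLusztig σ τ (W (Equiv.swap i j)) (Xel i) (Xel j) T)
    (hT' : IsDemazureLusztig σ τ (W (Equiv.swap j k)) (Xel j) (Xel k) T') :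
    T * T' * T = T' * T * T' := by
  have hk : Equiv.swap i j k = k := Equiv.swap_apply_of_ne_of_ne hik.symm hjk.symm
  have hi : Equiv.swap j k i = i := Equiv.swap_apply_of_ne_of_ne hij hik
  have hperm : Equiv.swap i j * Equiv.swap j k * Equiv.swap i j
      = Equiv.swap j k * Equiv.swap i j * Equiv.swap j k := by
    rw [Equiv.swap_mul_swap_mul_swap hij hik, Equiv.swap_comm i j, Equiv.swap_comm j k,
      Equiv.swap_mul_swap_mul_swap hjk.symm hik.symm, Equiv.swap_comm]
  refine hT.braid hT' (isLeftRegular_Xel_sub_Xel hij) (isLeftRegular_Xel_sub_Xel hjk)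
    (isLeftRegular_Xel_sub_Xel hik) (map_swap_mul_self hW i j) (map_swap_mul_self hW j k)
    ?_ ?_ ?_ ?_ ?_ ?_ ?_
  · simp only [← map_mul_of_isMonomialOp hW, hperm]
  all_goals
    intro p
    simp only [map_apply_Xel_mul hW, Equiv.swap_apply_left, Equiv.swap_apply_right, hi, hk]

end SymmetricGroupAction

section DoubleAffineRelations

variable {m : ℕ} {W : Equiv.Perm (Fin (m + 1)) → Module.End R (Laur R (m + 1))} {σ τ : R} {q : Rˣ}
  {T : ℕ → Module.End R (Laur R (m + 1))} {π : Module.End R (Laur R (m + 1))}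

theorem finRotate_symm_succ {k : ℕ} (hk : k + 1 < m + 1) :
    (finRotate (m + 1)).symm ⟨k + 1, hk⟩ = ⟨k, Nat.lt_of_succ_lt hk⟩ := by
  rw [Equiv.symm_apply_eq, finRotate_of_lt (by omega)]

theorem finRotate_symm_zero : (finRotate (m + 1)).symm 0 = Fin.last m := by
  rw [Equiv.symm_apply_eq, finRotate_last]

theorem powChar_equivMapDomain_swap {n : ℕ} (q : Rˣ) {i j k : Fin n} (hi : k ≠ i) (hj : k ≠ j)
    (v : Fin n →₀ ℤ) :
    powChar q k (Finsupp.equivMapDomain (Equiv.swap i j) v) = powChar q k v := by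
  simp [powChar, Equiv.swap_apply_of_ne_of_ne hi hj]

theorem XinvOp_apply {n i : ℕ} (hi : i < n) (p : Laur R n) : XinvOp i p = XinvEl ⟨i, hi⟩ * p := by
  simp [XinvOp, hi, mulOp]

theorem commute_XinvOp_XinvOp {n : ℕ} (i j : ℕ) :
    Commute (XinvOp i : Module.End R (Laur R n)) (XinvOp j) := by
  unfold XinvOp
  split_ifs
  · exact LinearMap.ext fun p => mul_left_comm _ _ p
  all_goals simp

theorem semiconjBy_rotation_XinvOp (hπ : IsMonomialOp (finRotate (m + 1)).symm (powChar q 0) π)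
    {p : ℕ} (hp : p + 1 = m) : SemiconjBy π (XinvOp m) (XinvOp p) := by
  subst hp
  refine LinearMap.ext fun f => ?_
  rw [Module.End.mul_apply, Module.End.mul_apply, XinvOp_apply (by omega), XinvOp_apply (by omega),
    hπ.apply_XinvEl_mul, finRotate_symm_succ]
  simp [powChar]

section Hecke

variable (hW : ∀ w, IsMonomialOp w 1 (W w))
  (hT : ∀ k (hk : k + 1 < m + 1), IsDemazureLusztig σ τ
    (W (Equiv.swap ⟨k, Nat.lt_of_succ_lt hk⟩ ⟨k + 1, hk⟩))
    (Xel ⟨k, Nat.lt_of_succ_lt hk⟩) (Xel ⟨k + 1, hk⟩) (T k))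

include hW hT

theorem braidRelations_demazureLusztig : BraidRelations T m where
  braid k hk := by
    have hk₁ := hT k (by omega)
    have hk₂ := hT (k + 1) (by omega)
    exact braid_demazureLusztig hW (by simp) (by simp) (by simp; omega) hk₁ hk₂
  commute k l hkl hl := by
    have hk := hT k (by omega)
    have hl := hT l (by omega)
    exact commute_demazureLusztig hW (by simp) (by simp) (by simp; omega) (by simp; omega)
      (by simp; omega) (by simp; omega) hk hl

theorem affineBraidRelations_demazureLusztig
    (hπ : IsMonomialOp (finRotate (m + 1)).symm (powChar q 0) π) : AffineBraidRelations T π m where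
  toBraidRelations := braidRelations_demazureLusztig hW hT
  shift k hk := by
    have hk₁ := hT k (by omega)
    have hk₂ := hT (k + 1) (by omega)
    have hχ := powChar_equivMapDomain_swap (n := m + 1) q (i := ⟨k + 1, by omega⟩)
      (j := ⟨k + 1 + 1, by omega⟩) (k := 0) (by simp [Fin.ext_iff]) (by simp [Fin.ext_iff])
    exact semiconjBy_demazureLusztig hW hπ hχ (by simp) (finRotate_symm_succ _)
      (finRotate_symm_succ _) hk₂ hk₁
  wrap p hp := by
    subst hp
    set w := (finRotate (p + 1 + 1)).symm
    have hw_zero : w 0 = ⟨p + 1, by omega⟩ := finRotate_symm_zero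
    have hw_one : w 1 = 0 := finRotate_symm_succ (k := 0) (by omega)
    have hw_last : w ⟨p + 1, by omega⟩ = ⟨p, by omega⟩ := finRotate_symm_succ (by omega)
    have hππ : IsMonomialOp (w * w) (powChar q 0 * powChar q 1) (π * π) := fun v => by
      rw [hπ.mul_apply_mono hπ]
      simp [powChar, w]
    refine semiconjBy_demazureLusztig hW hππ (fun v => ?_) (by simp) ?_ ?_ (hT 0 (by omega))
      (hT p (by omega))
    · simp [powChar, mul_comm]
    · exact (congrArg w hw_zero).trans hw_last
    · exact (congrArg w hw_one).trans hw_zero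

theorem demazureLusztig_mul_self {k : ℕ} (hk : k < m) :
    T k * T k = (σ * τ) • (1 : Module.End R (Laur R (m + 1))) + (τ - σ) • T k :=
  (hT k (by omega)).quadratic (isLeftRegular_Xel_sub_Xel (by simp)) (map_swap_mul_self hW _ _)
    (fun p => by rw [map_apply_Xel_mul hW, Equiv.swap_apply_left])
    (fun p => by rw [map_apply_Xel_mul hW, Equiv.swap_apply_right])

theorem commute_demazureLusztig_XinvOp {k : ℕ} (hk : k + 1 < m) :
    Commute (T k) (XinvOp m) := by
  refine LinearMap.ext fun p => ?_
  rw [Module.End.mul_apply, Module.End.mul_apply, XinvOp_apply (by omega), XinvOp_apply (by omega)]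
  refine (hT k (by omega)).apply_mul_of_fixed (isLeftRegular_Xel_sub_Xel (by simp)) (fun f => ?_) p
  rw [map_apply_XinvEl_mul hW, Equiv.swap_apply_of_ne_of_ne] <;> simp <;> omega

theorem demazureLusztig_mul_XinvOp {p : ℕ} (hp : p + 1 = m) :
    T p * XinvOp m = XinvOp p * (T p - (τ - σ) • 1) := by
  subst hp
  refine LinearMap.ext fun f => ?_
  rw [Module.End.mul_apply, Module.End.mul_apply, XinvOp_apply (by omega), XinvOp_apply (by omega)]
  refine (hT p (by omega)).apply_inv_mul (isLeftRegular_Xel_sub_Xel (by simp))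
    (Xel_mul_XinvEl _) (Xel_mul_XinvEl _) (fun g => ?_) f
  rw [map_apply_XinvEl_mul hW, Equiv.swap_apply_right]

theorem demazureLusztig_mul_XinvOp_mul {p : ℕ} (hp : p + 1 = m) :
    T p * XinvOp m * T p = (σ * τ) • XinvOp p := by
  rw [demazureLusztig_mul_XinvOp hW hT hp, mul_assoc, sub_mul,
    demazureLusztig_mul_self hW hT (by omega), smul_mul_assoc, one_mul, add_sub_cancel_right,
    mul_smul_comm, mul_one]

end Hecke

end DoubleAffineRelations

theorem statement17_general
    (R : Type*) [CommRing R] (n : ℕ) [NeZero n] (q τ : Rˣ)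
    (W : Equiv.Perm (Fin n) → Module.End R (Laur R n)) (hW : ∀ w, IsMonomialOp w 1 (W w))
    (T Ti : ℕ → Module.End R (Laur R n))
    (hT : ∀ (k : ℕ) (hk : k + 1 < n), IsDemazureLusztig (↑τ⁻¹ : R) τ
      (W (Equiv.swap ⟨k, Nat.lt_of_succ_lt hk⟩ ⟨k + 1, hk⟩))
      (Xel ⟨k, Nat.lt_of_succ_lt hk⟩) (Xel ⟨k + 1, hk⟩) (T k))
    (hTi : ∀ k, Ti k = T k + (↑τ⁻¹ - τ : R) • (1 : Module.End R (Laur R n)))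
    (piInv : Module.End R (Laur R n))
    (hpiInv : IsMonomialOp (finRotate n).symm (powChar q 0) piInv)
    (Y Yi : ℕ → Module.End R (Laur R n))
    (hY : ∀ i, Y i = aF T i (n - 1 - i) * piInv * aF Ti 0 i)
    (hYinv : ∀ i, i < n → Y i * Yi i = 1 ∧ Yi i * Y i = 1)
    (s : Finset ℤ) (a : ℤ → R) (Dc : ℕ → Module.End R (Laur R n))
    (hDc : ∀ i, Dc i = aF T i (n - 1 - i)
        * (XinvOp (n - 1) * ∑ j ∈ s, a j • zpowOp (Y (n - 1)) (Yi (n - 1)) j)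
        * dF T i (n - 1 - i))
    (i j : ℕ) (hi : i < n) (hj : j < n) : Commute (Dc i) (Dc j) := by
  obtain ⟨m, rfl⟩ := Nat.exists_eq_succ_of_ne_zero (NeZero.ne n)
  have hecke (k : ℕ) (hk : k < m) : T k * T k = 1 + ((τ : R) - ↑τ⁻¹) • T k := by
    simpa using demazureLusztig_mul_self hW hT hk
  have hTi_eq (k : ℕ) : Ti k = T k - ((τ : R) - ↑τ⁻¹) • 1 := by
    rw [hTi]
    module
  have hTi_mul (k : ℕ) (hk : k < m) : Ti k * T k = 1 := by
    rw [hTi_eq, sub_smul_one_mul_of_mul_self (hecke k hk)]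
  have hYm : Y m = piInv * aF Ti 0 m := by simp [hY, aF]
  have hYm_mul : Y m * dF T 0 m = piInv := by
    rw [hYm, mul_assoc, aF_mul_dF_eq_one fun k hk => hTi_mul k (by omega), mul_one]
  let y : (Module.End R (Laur R (m + 1)))ˣ :=
    ⟨Y m, Yi m, (hYinv m m.lt_succ_self).1, (hYinv m m.lt_succ_self).2⟩
  have hsum : ∑ j ∈ s, a j • zpowOp (Y m) (Yi m) j = laurentSum s a y :=
    Finset.sum_congr rfl fun j _ => congrArg (a j • ·) (zpowOp_units y j)
  have htx (p : ℕ) (hp : p + 1 = m) : T p * XinvOp m * T p = XinvOp (m - 1) := by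
    subst hp
    simpa using demazureLusztig_mul_XinvOp_mul hW hT rfl
  exact (affineBraidRelations_demazureLusztig hW hT hpiInv).commute_conj_laurentSum (y := y) hecke
    hYm_mul (fun k hk => commute_demazureLusztig_XinvOp hW hT hk) htx
    (fun hm => semiconjBy_rotation_XinvOp hpiInv (by omega)) (commute_XinvOp_XinvOp m (m - 1)) s a
    (fun i => hsum ▸ hDc i) (Nat.le_of_lt_succ hi) (Nat.le_of_lt_succ hj)

/-- The operators `𝒟_i = T⁺_{i,n-1} ⬝ (X_n⁻¹ ∑_{j=-l₁}^{l₂} a_j Y_n^j)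
⬝ T⁻_{n-1,i}` pairwise commute (indices `0`-based). -/
theorem statement17
    (F : Type*) [Field F] (n : ℕ) [NeZero n]
    (q τ : F) (hq : q ≠ 0) (hqroot : ∀ m : ℕ, m ≠ 0 → q ^ m ≠ 1) (hτ : τ ≠ 0)
    -- the action of the symmetric group permuting the variables
    (W : Equiv.Perm (Fin n) → Module.End F (Laur F n))
    (hW : ∀ (w : Equiv.Perm (Fin n)) (v : Fin n →₀ ℤ) (r : F),
      W w (mono v r) = mono (Finsupp.equivMapDomain w v) r)
    -- the Demazure–Lusztig operators `T_k` and their inverses `Ti k = T k + τ⁻¹ - τ`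
    (T Ti : ℕ → Module.End F (Laur F n))
    (hT : ∀ (k : ℕ) (hk : k + 1 < n) (p : Laur F n),
      (Xel ⟨k + 1, hk⟩ - Xel ⟨k, Nat.lt_of_succ_lt hk⟩) * T k p
        = (τ⁻¹ • Xel ⟨k + 1, hk⟩ - τ • Xel ⟨k, Nat.lt_of_succ_lt hk⟩)
            * W (Equiv.swap ⟨k, Nat.lt_of_succ_lt hk⟩ ⟨k + 1, hk⟩) p
          + (τ - τ⁻¹) • (Xel ⟨k + 1, hk⟩ * p))
    (hTi : ∀ k, Ti k = T k + (τ⁻¹ - τ) • (1 : Module.End F (Laur F n)))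
    (hTinv : ∀ k, k + 1 < n → T k * Ti k = 1 ∧ Ti k * T k = 1)
    -- the operator `π⁻¹`
    (piInv : Module.End F (Laur F n))
    (hpiInv : ∀ (v : Fin n →₀ ℤ) (r : F),
      piInv (mono v r)
        = q ^ (v 0) • mono (Finsupp.equivMapDomain (finRotate n).symm v) r)
    -- the operators `Y_i = T_i ⋯ T_{n-1} ⬝ π⁻¹ ⬝ T_1⁻¹ ⋯ T_{i-1}⁻¹` and their inverses
    (Y Yi : ℕ → Module.End F (Laur F n))
    (hY : ∀ i, Y i = aF T i (n - 1 - i) * piInv * aF Ti 0 i)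
    (hYinv : ∀ i, i < n → Y i * Yi i = 1 ∧ Yi i * Y i = 1)
    -- the van Diejen-type operators `𝒟_i` with parameters `l₁, l₂` and `a_j`
    (l₁ l₂ : ℕ) (a : ℤ → F)
    (Dc : ℕ → Module.End F (Laur F n))
    (hDc : ∀ i, Dc i = aF T i (n - 1 - i)
        * (XinvOp (n - 1) *
            ∑ j ∈ Finset.Icc (-(l₁ : ℤ)) (l₂ : ℤ), a j • zpowOp (Y (n - 1)) (Yi (n - 1)) j)
        * dF T i (n - 1 - i))
    :
    ∀ i j : ℕ, i < n → j < n → Dc i * Dc j = Dc j * Dc i := by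
  exact statement17_general F n (Units.mk0 q hq) (Units.mk0 τ hτ) W (fun w v => by simp [hW])
    T Ti hT hTi piInv (fun v => by simpa [powChar] using hpiInv v 1) Y Yi hY hYinv _ a Dc hDc
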